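/- Let q ≥ 1 and μ, ν ∈ ℂ with Re μ > (q-1)/2 and Re ν > (q-1)/2. Then the function x ↦ det(x)^{μ-(q+1)/2} det(I-x)^{ν-(q+1)/2} is absolutely integrable over the set {x ∈ Sym(q,ℝ) : 0 < x < I} with respect to Lebesgue measure on the space of q×q real symmetric matrices. -/

import Mathlib

open MeasureTheory Matrix Complex

variable (q : ℕ)

/-- Index set for the independent entries of a symmetric `q×q` matrix. -/
abbrev SymIdx (q : ℕ) := {p : Fin q × Fin q // p.1 ≤ p.2}

/-- The symmetric matrix determined by its upper-triangular entries. -/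
def symOfFun (f : SymIdx q → ℝ) : Matrix (Fin q) (Fin q) ℝ := fun i j =>
  if h : i ≤ j then f ⟨(i, j), h⟩ else f ⟨(j, i), (not_le.mp h).le⟩

instance : MeasurableSpace (Matrix (Fin q) (Fin q) ℝ) :=
  inferInstanceAs (MeasurableSpace ((Fin q) → (Fin q) → ℝ))

/-- Lebesgue measure on the space of real symmetric `q×q` matrices, realized as the
pushforward of Lebesgue measure on the coordinates. -/
noncomputable def symMeasure : Measure (Matrix (Fin q) (Fin q) ℝ) :=
  Measure.map (symOfFun q) volume

/-!
Write a symmetric matrix of size `n + 1` as a bordered matrix `[[c, vᵀ], [v, A]]`. By Schur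
complements, `det(x)₊ ^ a = det(A)₊ ^ a * (c - vᵀ A⁻¹ v)₊ ^ a`, and likewise for `1 - x`. The
integral over `c` is then a rescaled Euler beta integral, equal to
`B(a + 1, b + 1) * (1 - vᵀ (A⁻¹ + (1 - A)⁻¹) v)₊ ^ (a + b + 1)`. Since
`A⁻¹ + (1 - A)⁻¹ = A⁻¹ (1 - A)⁻¹`, a linear substitution in `v` turns this into an integral over
the unit ball times the Jacobian `(det A * det (1 - A)) ^ (1 / 2)`. So each step from size `n + 1`
down to size `n` costs finite constants and raises both exponents by `1 / 2`; starting from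
exponents greater than `-1`, every integral met on the way converges.
-/

open scoped ENNReal

/-- The truncated power `x₊ ^ a`, valued in `[0, ∞]`: it vanishes for `x ≤ 0`, whatever `a` is. -/
noncomputable def truncPow (a x : ℝ) : ℝ≥0∞ :=
  if 0 < x then ENNReal.ofReal (x ^ a) else 0

/-- Euler's beta integral `B(a + 1, b + 1)`, as an element of `[0, ∞]` so that it makes sense for
all exponents. -/
noncomputable def eulerBeta (a b : ℝ) : ℝ≥0∞ :=
  ∫⁻ u, truncPow a u * truncPow b (1 - u)

/-- The integral of `(1 - ‖w‖ ^ 2) ^ t` over the Euclidean unit ball of `ℝⁿ`. -/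
noncomputable def ballBeta (n : ℕ) (t : ℝ) : ℝ≥0∞ :=
  ∫⁻ w : Fin n → ℝ, truncPow t (1 - w ⬝ᵥ w)

section TruncatedPower

variable {a b x y : ℝ}

lemma truncPow_of_pos (a : ℝ) (hx : 0 < x) : truncPow a x = ENNReal.ofReal (x ^ a) :=
  if_pos hx

lemma truncPow_of_nonpos (a : ℝ) (hx : x ≤ 0) : truncPow a x = 0 :=
  if_neg hx.not_gt

lemma truncPow_ne_top : truncPow a x ≠ ∞ := by
  unfold truncPow
  split_ifs <;> simp

@[fun_prop]
lemma measurable_truncPow (a : ℝ) : Measurable (truncPow a) :=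
  Measurable.ite measurableSet_Ioi (by fun_prop) measurable_const

lemma truncPow_mul_of_pos (a : ℝ) (hx : 0 < x) (y : ℝ) :
    truncPow a (x * y) = truncPow a x * truncPow a y := by
  rcases lt_or_ge 0 y with hy | hy
  · rw [truncPow_of_pos a (mul_pos hx hy), truncPow_of_pos a hx, truncPow_of_pos a hy,
      ← ENNReal.ofReal_mul (by positivity), Real.mul_rpow hx.le hy.le]
  · rw [truncPow_of_nonpos a (mul_nonpos_of_nonneg_of_nonpos hx.le hy), truncPow_of_nonpos a hy,
      mul_zero]

lemma truncPow_add (a b x : ℝ) : truncPow (a + b) x = truncPow a x * truncPow b x := by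
  rcases lt_or_ge 0 x with hx | hx
  · rw [truncPow_of_pos _ hx, truncPow_of_pos _ hx, truncPow_of_pos _ hx,
      ← ENNReal.ofReal_mul (by positivity), Real.rpow_add hx]
  · simp only [truncPow_of_nonpos _ hx, mul_zero]

lemma truncPow_one_of_pos (hx : 0 < x) : truncPow 1 x = ENNReal.ofReal x := by
  rw [truncPow_of_pos 1 hx, Real.rpow_one]

lemma truncPow_sqrt (a x : ℝ) : truncPow a √x = truncPow (a / 2) x := by
  rcases lt_or_ge 0 x with hx | hx
  · rw [truncPow_of_pos a (Real.sqrt_pos.2 hx), truncPow_of_pos _ hx, Real.sqrt_eq_rpow,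
      ← Real.rpow_mul hx.le, one_div_mul_eq_div]
  · rw [truncPow_of_nonpos a (Real.sqrt_eq_zero_of_nonpos hx).le, truncPow_of_nonpos _ hx]

end TruncatedPower

section EulerBeta

lemma lintegral_eq_abs_mul_lintegral_comp_mul_add {f : ℝ → ℝ≥0∞} (hf : Measurable f) {r : ℝ}
    (hr : r ≠ 0) (s : ℝ) : ∫⁻ x, f x = ENNReal.ofReal |r| * ∫⁻ u, f (r * u + s) := by
  calc ∫⁻ x, f x = ∫⁻ x, f (x + s) := (lintegral_add_right_eq_self f s).symm
    _ = ∫⁻ x, f (x + s) ∂(ENNReal.ofReal |r| • Measure.map (r * ·) volume) := by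
      rw [Real.smul_map_volume_mul_left hr]
    _ = ENNReal.ofReal |r| * ∫⁻ u, f (r * u + s) := by
      rw [lintegral_smul_measure, lintegral_map (by fun_prop) (by fun_prop), smul_eq_mul]

lemma lintegral_truncPow_sub_mul_truncPow_sub (a b x y : ℝ) :
    ∫⁻ c, truncPow a (c - x) * truncPow b (y - c) =
      truncPow (a + b + 1) (y - x) * eulerBeta a b := by
  rcases lt_or_ge x y with hxy | hxy
  · have hr : 0 < y - x := sub_pos.2 hxy
    have rescale (u : ℝ) : truncPow a ((y - x) * u + x - x) * truncPow b (y - ((y - x) * u + x)) =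
        truncPow (a + b) (y - x) * (truncPow a u * truncPow b (1 - u)) := by
      rw [show (y - x) * u + x - x = (y - x) * u by ring,
        show y - ((y - x) * u + x) = (y - x) * (1 - u) by ring, truncPow_mul_of_pos a hr,
        truncPow_mul_of_pos b hr, truncPow_add]
      ring
    rw [lintegral_eq_abs_mul_lintegral_comp_mul_add (by fun_prop) hr.ne' x, abs_of_pos hr]
    simp_rw [rescale]
    rw [lintegral_const_mul _ (by fun_prop), truncPow_add (a + b), truncPow_one_of_pos hr,
      eulerBeta]
    ring
  · have vanish (c : ℝ) : truncPow a (c - x) * truncPow b (y - c) = 0 := by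
      rcases le_total c x with hc | hc
      · rw [truncPow_of_nonpos a (by linarith), zero_mul]
      · rw [truncPow_of_nonpos b (by linarith), mul_zero]
    simp_rw [vanish]
    rw [lintegral_zero, truncPow_of_nonpos _ (by linarith), zero_mul]

lemma eulerBeta_eq_ofReal_beta {a b : ℝ} (ha : -1 < a) (hb : -1 < b) :
    eulerBeta a b = ENNReal.ofReal (ProbabilityTheory.beta (a + 1) (b + 1)) := by
  have hB : 0 < ProbabilityTheory.beta (a + 1) (b + 1) :=
    ProbabilityTheory.beta_pos (by linarith) (by linarith)
  have density (u : ℝ) : truncPow a u * truncPow b (1 - u) =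
      ENNReal.ofReal (ProbabilityTheory.beta (a + 1) (b + 1)) *
        ProbabilityTheory.betaPDF (a + 1) (b + 1) u := by
    rcases le_or_gt u 0 with hu | hu
    · rw [truncPow_of_nonpos a hu, ProbabilityTheory.betaPDF_eq_zero_of_nonpos hu, zero_mul,
        mul_zero]
    rcases le_or_gt 1 u with hu1 | hu1
    · rw [truncPow_of_nonpos b (by linarith), ProbabilityTheory.betaPDF_eq_zero_of_one_le hu1,
        mul_zero, mul_zero]
    rw [truncPow_of_pos a hu, truncPow_of_pos b (sub_pos.2 hu1),
      ProbabilityTheory.betaPDF_of_pos_lt_one hu hu1, ← ENNReal.ofReal_mul (by positivity),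
      ← ENNReal.ofReal_mul hB.le]
    congr 1
    simp only [add_sub_cancel_right]
    field_simp
  simp_rw [eulerBeta, density]
  rw [lintegral_const_mul' _ _ ENNReal.ofReal_ne_top,
    ProbabilityTheory.lintegral_betaPDF_eq_one (by linarith) (by linarith), mul_one]

lemma eulerBeta_lt_top {a b : ℝ} (ha : -1 < a) (hb : -1 < b) : eulerBeta a b < ∞ := by
  rw [eulerBeta_eq_ofReal_beta ha hb]
  exact ENNReal.ofReal_lt_top

end EulerBeta

section Ball

lemma truncPow_sub_sq (t s x : ℝ) :
    truncPow t (s - x ^ 2) = truncPow t (x - -√s) * truncPow t (√s - x) := by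
  rcases le_or_gt s 0 with hs | hs
  · rw [Real.sqrt_eq_zero_of_nonpos hs, truncPow_of_nonpos t (by nlinarith)]
    rcases le_total x 0 with hx | hx
    · rw [truncPow_of_nonpos t (by linarith), zero_mul]
    · rw [truncPow_of_nonpos t (x := 0 - x) (by linarith), mul_zero]
  have factor : s - x ^ 2 = (x - -√s) * (√s - x) := by
    linear_combination -Real.sq_sqrt hs.le
  have hs' : 0 < √s := Real.sqrt_pos.2 hs
  rcases lt_or_ge 0 (x - -√s) with hx | hx
  · rw [factor, truncPow_mul_of_pos t hx]
  · rw [factor, truncPow_of_nonpos t hx, zero_mul, truncPow_of_nonpos]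
    exact mul_nonpos_of_nonpos_of_nonneg hx (by linarith)

lemma lintegral_truncPow_sub_sq (t s : ℝ) :
    ∫⁻ x, truncPow t (s - x ^ 2) =
      truncPow (2 * t + 1) 2 * eulerBeta t t * truncPow (t + 1 / 2) s := by
  simp_rw [truncPow_sub_sq]
  rw [lintegral_truncPow_sub_mul_truncPow_sub, show √s - -√s = 2 * √s by ring,
    truncPow_mul_of_pos _ two_pos, truncPow_sqrt, ← two_mul,
    show (2 * t + 1) / 2 = t + 1 / 2 by ring]
  ring

lemma lintegral_fin_succ {n : ℕ} {f : (Fin (n + 1) → ℝ) → ℝ≥0∞} (hf : Measurable f) :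
    ∫⁻ w, f w = ∫⁻ v : Fin n → ℝ, ∫⁻ c : ℝ, f (Fin.cons c v) := by
  have cons_preserving :
      MeasurePreserving fun p : ℝ × (Fin n → ℝ) => (Fin.cons p.1 p.2 : Fin (n + 1) → ℝ) := by
    convert (volume_preserving_piFinSuccAbove (fun _ : Fin (n + 1) => ℝ) 0).symm using 1
    ext p : 1
    exact (Fin.insertNth_zero' p.1 p.2).symm
  rw [← cons_preserving.lintegral_comp hf]
  exact lintegral_prod_symm' _ (hf.comp cons_preserving.measurable)

lemma ballBeta_zero (t : ℝ) : ballBeta 0 t = 1 := by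
  simp [ballBeta, lintegral_unique, truncPow_of_pos, volume_pi]

theorem ballBeta_succ (n : ℕ) (t : ℝ) :
    ballBeta (n + 1) t = truncPow (2 * t + 1) 2 * eulerBeta t t * ballBeta n (t + 1 / 2) := by
  have slice (v : Fin n → ℝ) (c : ℝ) :
      1 - (Fin.cons c v : Fin (n + 1) → ℝ) ⬝ᵥ Fin.cons c v = 1 - v ⬝ᵥ v - c ^ 2 := by
    simp only [dotProduct, Fin.sum_univ_succ, Fin.cons_zero, Fin.cons_succ]
    ring
  rw [ballBeta, lintegral_fin_succ (by unfold dotProduct; fun_prop)]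
  simp_rw [slice, lintegral_truncPow_sub_sq]
  rw [lintegral_const_mul _ (by unfold dotProduct; fun_prop), ballBeta]

lemma ballBeta_lt_top (n : ℕ) {t : ℝ} (ht : -1 < t) : ballBeta n t < ∞ := by
  induction n generalizing t with
  | zero => simp [ballBeta_zero]
  | succ n ih =>
    rw [ballBeta_succ]
    exact ENNReal.mul_lt_top (ENNReal.mul_lt_top truncPow_ne_top.lt_top (eulerBeta_lt_top ht ht))
      (ih (by linarith))

end Ball

section QuadraticForm

variable {ι : Type*} [Fintype ι] [DecidableEq ι]

open scoped MatrixOrder in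
lemma exists_isUnit_transpose_mul_self_eq {M : Matrix ι ι ℝ} (hM : M.PosDef) :
    ∃ B : Matrix ι ι ℝ, IsUnit B ∧ M = Bᵀ * B := by
  simpa only [star_eq_conjTranspose, conjTranspose_eq_transpose_of_trivial] using
    CStarAlgebra.isStrictlyPositive_iff_eq_star_mul_self.1 hM.isStrictlyPositive

lemma lintegral_comp_quadraticForm {M : Matrix ι ι ℝ} (hM : M.PosDef) {f : ℝ → ℝ≥0∞}
    (hf : Measurable f) :
    ∫⁻ v : ι → ℝ, f (v ⬝ᵥ M *ᵥ v) =
      ENNReal.ofReal (M.det ^ (-(1 / 2) : ℝ)) * ∫⁻ w : ι → ℝ, f (w ⬝ᵥ w) := by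
  obtain ⟨B, hB, rfl⟩ := exists_isUnit_transpose_mul_self_eq hM
  have hdet : B.det ≠ 0 := ((isUnit_iff_isUnit_det B).1 hB).ne_zero
  have quadratic (v : ι → ℝ) : v ⬝ᵥ (Bᵀ * B) *ᵥ v = toLin' B v ⬝ᵥ toLin' B v := by
    rw [toLin'_apply, ← mulVec_mulVec, dotProduct_mulVec, vecMul_transpose]
  have jacobian : (Bᵀ * B).det ^ (-(1 / 2) : ℝ) = |B.det⁻¹| := by
    rw [det_mul, det_transpose, Real.rpow_neg (mul_self_nonneg _), ← Real.sqrt_eq_rpow,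
      Real.sqrt_mul_self_eq_abs, abs_inv]
  simp_rw [quadratic]
  rw [← lintegral_map (f := fun w => f (w ⬝ᵥ w)) (by unfold dotProduct; fun_prop)
      (LinearMap.continuous_of_finiteDimensional _).measurable,
    Real.map_matrix_volume_pi_eq_smul_volume_pi hdet, lintegral_smul_measure, jacobian,
    smul_eq_mul]

end QuadraticForm

section Bordered

variable {R : Type*} {n : ℕ}

/-- The symmetric bordered matrix `[[c, vᵀ], [v, A]]`, the new index being `0`. -/
def bordered (A : Matrix (Fin n) (Fin n) R) (v : Fin n → R) (c : R) :
    Matrix (Fin (n + 1)) (Fin (n + 1)) R :=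
  of (Fin.cons (Fin.cons c v) fun i => Fin.cons (v i) (A i))

variable (A : Matrix (Fin n) (Fin n) R) (v : Fin n → R) (c : R)

@[simp] lemma bordered_zero_zero : bordered A v c 0 0 = c := rfl

@[simp] lemma bordered_zero_succ (j : Fin n) : bordered A v c 0 j.succ = v j := rfl

@[simp] lemma bordered_succ_zero (i : Fin n) : bordered A v c i.succ 0 = v i := rfl

@[simp] lemma bordered_succ_succ (i j : Fin n) : bordered A v c i.succ j.succ = A i j := rfl

lemma one_sub_bordered [Ring R] : 1 - bordered A v c = bordered (1 - A) (-v) (1 - c) := by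
  ext i j
  cases i using Fin.cases <;> cases j using Fin.cases <;>
    simp [one_apply, Fin.succ_ne_zero, (Fin.succ_ne_zero _).symm]

lemma submatrix_succ_bordered : (bordered A v c).submatrix Fin.succ Fin.succ = A := rfl

/-- The block decomposition of the indices of a bordered matrix, the new index coming last. -/
def borderEquiv (n : ℕ) : Fin n ⊕ Unit ≃ Fin (n + 1) :=
  ((finSuccEquiv n).trans (Equiv.optionEquivSumPUnit (Fin n))).symm

lemma submatrix_borderEquiv_bordered [Zero R] :
    (bordered A v c).submatrix (borderEquiv n) (borderEquiv n) =
      fromBlocks A (replicateCol Unit v) (replicateRow Unit v) (diagonal fun _ => c) := by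
  ext (i | i) (j | j) <;> rfl

lemma diagonal_sub_replicateRow_mul_mul_replicateCol [Ring R] (c : R) :
    (diagonal fun _ => c) - replicateRow Unit v * A * replicateCol Unit v =
      diagonal fun _ => c - v ⬝ᵥ A *ᵥ v := by
  rw [Matrix.mul_assoc, ← replicateCol_mulVec]
  ext
  simp [mul_apply, dotProduct]

lemma det_bordered [CommRing R] (hA : IsUnit A.det) :
    (bordered A v c).det = A.det * (c - v ⬝ᵥ A⁻¹ *ᵥ v) := by
  have := invertibleOfIsUnitDet A hA
  rw [← det_submatrix_equiv_self (borderEquiv n), submatrix_borderEquiv_bordered,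
    det_fromBlocks₁₁, invOf_eq_nonsing_inv, diagonal_sub_replicateRow_mul_mul_replicateCol,
    det_diagonal, Fintype.prod_unique]

lemma posSemidef_bordered_iff {A : Matrix (Fin n) (Fin n) ℝ} (hA : A.PosDef) (v : Fin n → ℝ)
    (c : ℝ) : (bordered A v c).PosSemidef ↔ 0 ≤ c - v ⬝ᵥ A⁻¹ *ᵥ v := by
  have := invertibleOfIsUnitDet A hA.det_pos.ne'.isUnit
  have schur := hA.fromBlocks₁₁ (replicateCol Unit v) (diagonal fun _ => c)
  rw [conjTranspose_eq_transpose_of_trivial, transpose_replicateCol,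
    diagonal_sub_replicateRow_mul_mul_replicateCol, posSemidef_diagonal_iff] at schur
  rw [← posSemidef_submatrix_equiv (borderEquiv n), submatrix_borderEquiv_bordered, schur]
  simp

theorem posDef_bordered_iff (A : Matrix (Fin n) (Fin n) ℝ) (v : Fin n → ℝ) (c : ℝ) :
    (bordered A v c).PosDef ↔ A.PosDef ∧ 0 < c - v ⬝ᵥ A⁻¹ *ᵥ v := by
  constructor
  · intro h
    have hA : A.PosDef := submatrix_succ_bordered A v c ▸ h.submatrix (Fin.succ_injective n)
    have hdet := h.det_pos
    rw [det_bordered A v c hA.det_pos.ne'.isUnit] at hdet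
    exact ⟨hA, pos_of_mul_pos_right hdet hA.det_pos.le⟩
  · rintro ⟨hA, hc⟩
    refine ((posSemidef_bordered_iff hA v c).2 hc.le).posDef_iff_det_ne_zero.2 ?_
    rw [det_bordered A v c hA.det_pos.ne'.isUnit]
    exact (mul_pos hA.det_pos hc).ne'

end Bordered

section DetTruncPow

variable {ι : Type*} [Fintype ι] [DecidableEq ι] {x : Matrix ι ι ℝ} {n : ℕ}

open Classical in
/-- The truncated power `det(x)₊ ^ a` of a matrix, valued in `[0, ∞]`: it vanishes off the cone of
positive definite matrices. -/
noncomputable def detTruncPow (a : ℝ) (x : Matrix ι ι ℝ) : ℝ≥0∞ :=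
  if x.PosDef then truncPow a x.det else 0

lemma detTruncPow_of_posDef (a : ℝ) (hx : x.PosDef) : detTruncPow a x = truncPow a x.det :=
  if_pos hx

lemma detTruncPow_of_not_posDef (a : ℝ) (hx : ¬x.PosDef) : detTruncPow a x = 0 :=
  if_neg hx

lemma enorm_det_cpow (hx : x.PosDef) (z : ℂ) : ‖((x.det : ℝ) : ℂ) ^ z‖ₑ = detTruncPow z.re x := by
  rw [detTruncPow_of_posDef _ hx, truncPow_of_pos _ hx.det_pos, ← ofReal_norm,
    norm_cpow_eq_rpow_re_of_pos hx.det_pos]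

lemma inv_add_inv_one_sub (hx : IsUnit x) (hx' : IsUnit (1 - x)) :
    x⁻¹ + (1 - x)⁻¹ = x⁻¹ * (1 - x)⁻¹ := by
  rw [Matrix.inv_add_inv (iff_of_true hx hx'), add_sub_cancel, Matrix.mul_one]

lemma detTruncPow_mul_lintegral_quadraticForm (a b : ℝ) (x : Matrix ι ι ℝ) {f : ℝ → ℝ≥0∞}
    (hf : Measurable f) :
    detTruncPow a x * detTruncPow b (1 - x) *
        ∫⁻ v : ι → ℝ, f (v ⬝ᵥ (x⁻¹ + (1 - x)⁻¹) *ᵥ v) =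
      detTruncPow (a + 1 / 2) x * detTruncPow (b + 1 / 2) (1 - x) * ∫⁻ w : ι → ℝ, f (w ⬝ᵥ w) := by
  by_cases hx : x.PosDef
  swap
  · simp only [detTruncPow_of_not_posDef _ hx, zero_mul]
  by_cases hx' : (1 - x).PosDef
  swap
  · simp only [detTruncPow_of_not_posDef _ hx', mul_zero, zero_mul]
  have jacobian : ENNReal.ofReal ((x⁻¹ + (1 - x)⁻¹).det ^ (-(1 / 2) : ℝ)) =
      truncPow (1 / 2) x.det * truncPow (1 / 2) (1 - x).det := by
    have hdet := mul_pos hx.det_pos hx'.det_pos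
    rw [inv_add_inv_one_sub hx.isUnit hx'.isUnit, det_mul, det_nonsing_inv, det_nonsing_inv,
      Ring.inverse_eq_inv', ← mul_inv, Real.inv_rpow hdet.le,
      Real.rpow_neg hdet.le, inv_inv, ← truncPow_of_pos _ hdet, truncPow_mul_of_pos _ hx.det_pos]
  rw [lintegral_comp_quadraticForm (hx.inv.add hx'.inv) hf, jacobian]
  simp only [detTruncPow_of_posDef _ hx, detTruncPow_of_posDef _ hx', truncPow_add]
  ring

theorem detTruncPow_bordered (a : ℝ) (A : Matrix (Fin n) (Fin n) ℝ) (v : Fin n → ℝ) (c : ℝ) :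
    detTruncPow a (bordered A v c) = detTruncPow a A * truncPow a (c - v ⬝ᵥ A⁻¹ *ᵥ v) := by
  by_cases hA : A.PosDef
  swap
  · have h : ¬(bordered A v c).PosDef := fun h => hA ((posDef_bordered_iff A v c).1 h).1
    rw [detTruncPow_of_not_posDef a hA, detTruncPow_of_not_posDef a h, zero_mul]
  rw [detTruncPow_of_posDef a hA]
  by_cases h : (bordered A v c).PosDef
  · rw [detTruncPow_of_posDef a h, det_bordered A v c hA.det_pos.ne'.isUnit,
      truncPow_mul_of_pos a hA.det_pos]
  · have hc : c - v ⬝ᵥ A⁻¹ *ᵥ v ≤ 0 := by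
      simpa only [posDef_bordered_iff, hA, true_and, not_lt] using h
    rw [detTruncPow_of_not_posDef a h, truncPow_of_nonpos a hc, mul_zero]

lemma lintegral_detTruncPow_bordered (a b : ℝ) (A : Matrix (Fin n) (Fin n) ℝ) (v : Fin n → ℝ) :
    ∫⁻ c, detTruncPow a (bordered A v c) * detTruncPow b (1 - bordered A v c) =
      detTruncPow a A * detTruncPow b (1 - A) *
        (truncPow (a + b + 1) (1 - v ⬝ᵥ (A⁻¹ + (1 - A)⁻¹) *ᵥ v) * eulerBeta a b) := by
  have factor (c : ℝ) :
      detTruncPow a (bordered A v c) * detTruncPow b (1 - bordered A v c) =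
        detTruncPow a A * detTruncPow b (1 - A) *
          (truncPow a (c - v ⬝ᵥ A⁻¹ *ᵥ v) * truncPow b (1 - v ⬝ᵥ (1 - A)⁻¹ *ᵥ v - c)) := by
    rw [one_sub_bordered, detTruncPow_bordered, detTruncPow_bordered, mulVec_neg,
      neg_dotProduct_neg, sub_right_comm]
    ring
  simp_rw [factor]
  rw [lintegral_const_mul _ (by fun_prop), lintegral_truncPow_sub_mul_truncPow_sub, add_mulVec,
    dotProduct_add, sub_sub, add_comm (v ⬝ᵥ A⁻¹ *ᵥ v)]

end DetTruncPow

section Measurability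

variable {n : ℕ}

instance : BorelSpace (Matrix (Fin n) (Fin n) ℝ) :=
  inferInstanceAs (BorelSpace (Fin n → Fin n → ℝ))

lemma measurable_symOfFun : Measurable (symOfFun n) := by
  refine measurable_pi_lambda _ fun i => measurable_pi_lambda _ fun j => ?_
  unfold symOfFun
  split_ifs <;> exact measurable_pi_apply _

@[fun_prop]
lemma measurable_bordered {α : Type*} [MeasurableSpace α] {A : α → Matrix (Fin n) (Fin n) ℝ}
    {v : α → Fin n → ℝ} {c : α → ℝ} (hA : Measurable A) (hv : Measurable v) (hc : Measurable c) :
    Measurable fun t => bordered (A t) (v t) (c t) := by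
  refine measurable_pi_lambda _ fun i => measurable_pi_lambda _ fun j => ?_
  cases i using Fin.cases <;> cases j using Fin.cases <;>
    simp only [bordered_zero_zero, bordered_zero_succ, bordered_succ_zero, bordered_succ_succ] <;>
    fun_prop

@[fun_prop]
lemma measurable_det : Measurable (det : Matrix (Fin n) (Fin n) ℝ → ℝ) :=
  continuous_id.matrix_det.measurable

@[fun_prop]
lemma measurable_one_sub : Measurable fun x : Matrix (Fin n) (Fin n) ℝ => 1 - x :=
  (continuous_const.sub continuous_id).measurable

lemma measurableSet_posDef : MeasurableSet {x : Matrix (Fin n) (Fin n) ℝ | x.PosDef} := by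
  have posDef_iff (x : Matrix (Fin n) (Fin n) ℝ) :
      x.PosDef ↔ (x.IsHermitian ∧ ∀ v, 0 ≤ star v ⬝ᵥ x *ᵥ v) ∧ x.det ≠ 0 := by
    rw [← posSemidef_iff_dotProduct_mulVec]
    exact ⟨fun h => ⟨h.posSemidef, h.det_pos.ne'⟩, fun h => h.1.posDef_iff_det_ne_zero.2 h.2⟩
  have closed_hermitian : IsClosed {x : Matrix (Fin n) (Fin n) ℝ | x.IsHermitian} :=
    isClosed_eq (by fun_prop) continuous_id
  have closed_nonneg :
      IsClosed {x : Matrix (Fin n) (Fin n) ℝ | ∀ v, 0 ≤ star v ⬝ᵥ x *ᵥ v} := by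
    simp only [Set.ofPred_forall]
    exact isClosed_iInter fun v => isClosed_le continuous_const (by fun_prop)
  simp only [posDef_iff]
  exact (closed_hermitian.inter closed_nonneg).measurableSet.inter
    (measurable_det (measurableSet_singleton 0).compl)

@[fun_prop]
lemma measurable_detTruncPow (a : ℝ) :
    Measurable (detTruncPow a : Matrix (Fin n) (Fin n) ℝ → ℝ≥0∞) :=
  Measurable.ite measurableSet_posDef (by fun_prop) measurable_const

end Measurability

section Coordinates

/-- The inclusion of the coordinates of `A`, and of those of the row `(c, v)`, into the coordinates
of `bordered A v c`. -/
def borderedIdx (n : ℕ) : SymIdx n ⊕ Fin (n + 1) → SymIdx (n + 1) :=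
  Sum.elim (fun p => ⟨(p.1.1.succ, p.1.2.succ), Fin.succ_le_succ_iff.2 p.2⟩)
    fun j => ⟨(0, j), Fin.zero_le j⟩

lemma borderedIdx_bijective (n : ℕ) : Function.Bijective (borderedIdx n) := by
  constructor
  · rintro (⟨⟨i, j⟩, hij⟩ | j) (⟨⟨i', j'⟩, hij'⟩ | j') h <;>
      simp_all [borderedIdx, Fin.succ_ne_zero, (Fin.succ_ne_zero _).symm]
  · rintro ⟨⟨i, j⟩, hij⟩
    cases i using Fin.cases with
    | zero => exact ⟨Sum.inr j, rfl⟩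
    | succ i =>
      cases j using Fin.cases with
      | zero => exact absurd hij (Fin.succ_pos i).not_ge
      | succ j => exact ⟨Sum.inl ⟨(i, j), Fin.succ_le_succ_iff.1 hij⟩, rfl⟩

lemma symOfFun_succ {n : ℕ} (g : SymIdx (n + 1) → ℝ) :
    symOfFun (n + 1) g =
      bordered (symOfFun n fun p => g (borderedIdx n (Sum.inl p)))
        (fun j => g (borderedIdx n (Sum.inr j.succ))) (g (borderedIdx n (Sum.inr 0))) := by
  ext i j
  cases i using Fin.cases <;> cases j using Fin.cases <;> simp [symOfFun, borderedIdx]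

lemma lintegral_pi_of_sum_equiv {α β ι : Type*} [Fintype α] [Fintype β] [Fintype ι]
    (e : α ⊕ β ≃ ι) {f : (ι → ℝ) → ℝ≥0∞} (hf : Measurable f) :
    ∫⁻ g, f g = ∫⁻ u : α → ℝ, ∫⁻ w : β → ℝ, f (Sum.elim u w ∘ e.symm) := by
  have glue_preserving :
      MeasurePreserving fun p : (α → ℝ) × (β → ℝ) => Sum.elim p.1 p.2 ∘ e.symm := by
    have reindex := volume_preserving_arrowCongr' e (.refl ℝ) (.id volume)
    have glue := volume_measurePreserving_sumPiEquivProdPi_symm fun _ : α ⊕ β => ℝ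
    exact reindex.comp glue
  rw [← glue_preserving.lintegral_comp hf]
  exact lintegral_prod _ (hf.comp glue_preserving.measurable).aemeasurable

lemma lintegral_symMeasure {n : ℕ} {F : Matrix (Fin n) (Fin n) ℝ → ℝ≥0∞} (hF : Measurable F) :
    ∫⁻ x, F x ∂symMeasure n = ∫⁻ f, F (symOfFun n f) :=
  lintegral_map hF measurable_symOfFun

lemma measurable_lintegral_comp_bordered {n : ℕ}
    {F : Matrix (Fin (n + 1)) (Fin (n + 1)) ℝ → ℝ≥0∞} (hF : Measurable F) :
    Measurable fun A => ∫⁻ v : Fin n → ℝ, ∫⁻ c : ℝ, F (bordered A v c) := by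
  have joint : Measurable fun p : (Matrix (Fin n) (Fin n) ℝ × (Fin n → ℝ)) × ℝ =>
      F (bordered p.1.1 p.1.2 p.2) := by fun_prop
  exact joint.lintegral_prod_right'.lintegral_prod_right'

theorem lintegral_symMeasure_succ {n : ℕ} {F : Matrix (Fin (n + 1)) (Fin (n + 1)) ℝ → ℝ≥0∞}
    (hF : Measurable F) :
    ∫⁻ x, F x ∂symMeasure (n + 1) =
      ∫⁻ A, (∫⁻ v : Fin n → ℝ, ∫⁻ c : ℝ, F (bordered A v c)) ∂symMeasure n := by
  let e := Equiv.ofBijective _ (borderedIdx_bijective n)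
  have symOfFun_glue (f : SymIdx n → ℝ) (w : Fin (n + 1) → ℝ) :
      symOfFun (n + 1) (Sum.elim f w ∘ e.symm) = bordered (symOfFun n f) (Fin.tail w) (w 0) := by
    have glue_apply (k) : (Sum.elim f w ∘ e.symm) (borderedIdx n k) = Sum.elim f w k :=
      congrArg (Sum.elim f w) (e.symm_apply_apply k)
    simp only [symOfFun_succ, glue_apply, Sum.elim_inl, Sum.elim_inr]
    rfl
  have row (A : Matrix (Fin n) (Fin n) ℝ) :
      ∫⁻ w : Fin (n + 1) → ℝ, F (bordered A (Fin.tail w) (w 0)) =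
        ∫⁻ v : Fin n → ℝ, ∫⁻ c : ℝ, F (bordered A v c) := by
    rw [lintegral_fin_succ (f := fun w => F (bordered A (Fin.tail w) (w 0)))
      (by unfold Fin.tail; fun_prop)]
    simp only [Fin.tail_cons, Fin.cons_zero]
  rw [lintegral_symMeasure hF, lintegral_symMeasure (measurable_lintegral_comp_bordered hF),
    lintegral_pi_of_sum_equiv e (f := fun g => F (symOfFun (n + 1) g))
      (hF.comp measurable_symOfFun)]
  simp only [symOfFun_glue, row]

end Coordinates

section MatrixBeta

/-- The beta integral `∫ det(x) ^ a det(1 - x) ^ b` over the symmetric matrices `0 < x < 1`, as an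
element of `[0, ∞]`. -/
noncomputable def matrixBeta (n : ℕ) (a b : ℝ) : ℝ≥0∞ :=
  ∫⁻ x, detTruncPow a x * detTruncPow b (1 - x) ∂symMeasure n

lemma matrixBeta_zero (a b : ℝ) : matrixBeta 0 a b = 1 := by
  have detTruncPow_eq_one (a : ℝ) (x : Matrix (Fin 0) (Fin 0) ℝ) : detTruncPow a x = 1 := by
    rw [Subsingleton.elim x 1, detTruncPow_of_posDef a PosDef.one, det_one,
      truncPow_of_pos a one_pos, Real.one_rpow, ENNReal.ofReal_one]
  rw [matrixBeta, lintegral_symMeasure (by fun_prop)]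
  simp [detTruncPow_eq_one, volume_pi]

theorem matrixBeta_succ (n : ℕ) (a b : ℝ) :
    matrixBeta (n + 1) a b =
      eulerBeta a b * ballBeta n (a + b + 1) * matrixBeta n (a + 1 / 2) (b + 1 / 2) := by
  have slice (A : Matrix (Fin n) (Fin n) ℝ) :
      ∫⁻ v : Fin n → ℝ, ∫⁻ c,
          detTruncPow a (bordered A v c) * detTruncPow b (1 - bordered A v c) =
        eulerBeta a b * ballBeta n (a + b + 1) *
          (detTruncPow (a + 1 / 2) A * detTruncPow (b + 1 / 2) (1 - A)) := by
    simp_rw [lintegral_detTruncPow_bordered]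
    rw [lintegral_const_mul _ (by unfold dotProduct mulVec; fun_prop),
      lintegral_mul_const _ (by unfold dotProduct; fun_prop), ← mul_assoc,
      detTruncPow_mul_lintegral_quadraticForm a b A
        (f := fun s => truncPow (a + b + 1) (1 - s)) (by fun_prop), ballBeta]
    ring
  rw [matrixBeta, lintegral_symMeasure_succ (by fun_prop)]
  simp_rw [slice]
  rw [lintegral_const_mul _ (by fun_prop), matrixBeta]

theorem matrixBeta_lt_top (n : ℕ) {a b : ℝ} (ha : -1 < a) (hb : -1 < b) :
    matrixBeta n a b < ∞ := by
  induction n generalizing a b with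
  | zero => simp [matrixBeta_zero]
  | succ n ih =>
    rw [matrixBeta_succ]
    exact ENNReal.mul_lt_top
      (ENNReal.mul_lt_top (eulerBeta_lt_top ha hb) (ballBeta_lt_top n (by linarith)))
      (ih (by linarith) (by linarith))

end MatrixBeta

/-- Absolute convergence of the matrix beta integral: for `Re μ, Re ν > (q-1)/2` the
function `x ↦ det(x)^{μ-(q+1)/2} det(I-x)^{ν-(q+1)/2}` is integrable over
`{x ∈ Sym(q,ℝ) : 0 < x < I}`. -/
theorem stmt_13 (hq : 1 ≤ q) (μ ν : ℂ)
    (hμ : μ.re > ((q : ℝ) - 1) / 2) (hν : ν.re > ((q : ℝ) - 1) / 2) :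
    IntegrableOn
      (fun x : Matrix (Fin q) (Fin q) ℝ =>
        ((x.det : ℝ) : ℂ) ^ (μ - ((q : ℂ) + 1) / 2) *
          (((1 - x).det : ℝ) : ℂ) ^ (ν - ((q : ℂ) + 1) / 2))
      {x : Matrix (Fin q) (Fin q) ℝ | x.PosDef ∧ (1 - x).PosDef}
      (symMeasure q) := by
  have measurable_integrand : Measurable fun x : Matrix (Fin q) (Fin q) ℝ =>
      ((x.det : ℝ) : ℂ) ^ (μ - ((q : ℂ) + 1) / 2) *
        (((1 - x).det : ℝ) : ℂ) ^ (ν - ((q : ℂ) + 1) / 2) := by fun_prop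
  have measurableSet_domain :
      MeasurableSet {x : Matrix (Fin q) (Fin q) ℝ | x.PosDef ∧ (1 - x).PosDef} :=
    measurableSet_posDef.inter (measurable_one_sub measurableSet_posDef)
  refine ⟨measurable_integrand.aestronglyMeasurable, ?_⟩
  calc ∫⁻ x in {x | x.PosDef ∧ (1 - x).PosDef}, ‖((x.det : ℝ) : ℂ) ^ (μ - ((q : ℂ) + 1) / 2) *
          (((1 - x).det : ℝ) : ℂ) ^ (ν - ((q : ℂ) + 1) / 2)‖ₑ ∂symMeasure q
      = ∫⁻ x in {x | x.PosDef ∧ (1 - x).PosDef}, detTruncPow (μ - ((q : ℂ) + 1) / 2).re x *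
          detTruncPow (ν - ((q : ℂ) + 1) / 2).re (1 - x) ∂symMeasure q :=
        setLIntegral_congr_fun measurableSet_domain fun x hx => by
          simp only [enorm_mul, enorm_det_cpow hx.1, enorm_det_cpow hx.2]
    _ ≤ matrixBeta q (μ - ((q : ℂ) + 1) / 2).re (ν - ((q : ℂ) + 1) / 2).re :=
        setLIntegral_le_lintegral _ _
    _ < ∞ := by
        refine matrixBeta_lt_top q ?_ ?_ <;> norm_num <;> linarith
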